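/- arXiv:1410.6881 — 8 statements merged into one kernel-verified Lean document; each statement's English description precedes it below -/
import Mathlib

section
/- Let (x, y, λ, μ) : [0,∞) → ℝ × ℝⁿ × ℝ × ℝⁿ be a C¹ solution of the geodesic Hamiltonian system such that x(t) > 0 for all t, the energy identity λ(t)² + ⟨G(x(t),y(t)) μ(t), μ(t)⟩ = 1 holds for all t ≥ 0, and x(t) → 0 as t → ∞. Then λ(t) → −1 and ⟨G(x(t),y(t)) μ(t), μ(t)⟩ → 0 as t → ∞. -/
open Filter Topology Set

noncomputable section

/-- The quadratic form `⟨A v, v⟩ = ∑ᵢⱼ Aᵢⱼ vᵢ vⱼ` of a matrix. -/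
def quadForm {n : ℕ} (A : Matrix (Fin n) (Fin n) ℝ) (v : Fin n → ℝ) : ℝ :=
  ∑ i, ∑ j, A i j * v i * v j

theorem aux_mvt (f f' : ℝ → ℝ) (T C : ℝ) (hf : ∀ t, T ≤ t → HasDerivAt f (f' t) t)
    (hC : ∀ t, T ≤ t → f' t ≤ C) (a b : ℝ) (ha : T ≤ a) (hab : a ≤ b) :
    f b - f a ≤ C * (b - a) := by
  refine (convex_Ici T).image_sub_le_mul_sub_of_deriv_le (f := f) ?_ ?_ ?_ a ha b (ha.trans hab) hab
  · intro t ht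
    exact (hf t ht).continuousAt.continuousWithinAt
  · intro t ht
    rw [interior_Ici] at ht
    exact (hf t (le_of_lt ht)).differentiableAt.differentiableWithinAt
  · intro t ht
    rw [interior_Ici] at ht
    rw [(hf t (le_of_lt ht)).deriv]
    exact hC t (le_of_lt ht)

/-- Along any forward-complete solution of the geodesic Hamiltonian system of an
asymptotically hyperbolic metric (in 0-cotangent coordinates) with `x > 0`, satisfying the
energy identity `λ² + ⟨Gμ,μ⟩ = 1`, and with `x(t) → 0` as `t → ∞`, one has `λ(t) → -1`
and `⟨Gμ,μ⟩(t) → 0` as `t → ∞`. -/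
theorem stmt_0 (n : ℕ) (hn : 1 ≤ n)
    (G Gx : ℝ → (Fin n → ℝ) → Matrix (Fin n) (Fin n) ℝ)
    (Gy : ℝ → (Fin n → ℝ) → Fin n → Matrix (Fin n) (Fin n) ℝ)
    (hGsymm : ∀ x y, (G x y).IsSymm)
    (c K : ℝ) (hc : 0 < c) (hK : 0 < K)
    (hell : ∀ x y (v : Fin n → ℝ), c * ∑ i, v i ^ 2 ≤ quadForm (G x y) v)
    (hGxbd : ∀ x y (v : Fin n → ℝ), |quadForm (Gx x y) v| ≤ K * ∑ i, v i ^ 2)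
    (x lam : ℝ → ℝ) (y mu : ℝ → Fin n → ℝ)
    (hxpos : ∀ t : ℝ, 0 ≤ t → 0 < x t)
    (hx : ∀ t : ℝ, 0 ≤ t → HasDerivAt x (2 * x t * lam t) t)
    (hy : ∀ t : ℝ, 0 ≤ t → ∀ i, HasDerivAt (fun s => y s i)
        (2 * x t * (G (x t) (y t)).mulVec (mu t) i) t)
    (hlam : ∀ t : ℝ, 0 ≤ t → HasDerivAt lam
        (-(2 * quadForm (G (x t) (y t)) (mu t)
            + x t * quadForm (Gx (x t) (y t)) (mu t))) t)
    (hmu : ∀ t : ℝ, 0 ≤ t → ∀ i, HasDerivAt (fun s => mu s i)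
        (2 * lam t * mu t i - x t * quadForm (Gy (x t) (y t) i) (mu t)) t)
    (hchain : ∀ t : ℝ, 0 ≤ t → ∀ i j, HasDerivAt (fun s => G (x s) (y s) i j)
        (2 * x t * lam t * Gx (x t) (y t) i j
          + ∑ k, 2 * x t * (G (x t) (y t)).mulVec (mu t) k * Gy (x t) (y t) k i j) t)
    (henergy : ∀ t : ℝ, 0 ≤ t →
        lam t ^ 2 + quadForm (G (x t) (y t)) (mu t) = 1)
    (hxlim : Tendsto x atTop (nhds 0)) :
    Tendsto lam atTop (nhds (-1)) ∧
      Tendsto (fun t => quadForm (G (x t) (y t)) (mu t)) atTop (nhds 0) := by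
  have hq0 : ∀ t, 0 ≤ quadForm (G (x t) (y t)) (mu t) := fun t =>
    le_trans (by positivity) (hell (x t) (y t) (mu t))
  have hlb : ∀ t, 0 ≤ t → -1 ≤ lam t := by
    intro t ht
    nlinarith [hq0 t, henergy t ht]
  have hev : ∀ᶠ t in atTop, x t < c / K := hxlim.eventually (gt_mem_nhds (by positivity))
  obtain ⟨T0, hT0⟩ := eventually_atTop.1 hev
  obtain ⟨T, hT, hTT⟩ : ∃ T, 0 ≤ T ∧ T0 ≤ T := ⟨max 0 T0, le_max_left _ _, le_max_right _ _⟩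
  have hder : ∀ t, T ≤ t → -(2 * quadForm (G (x t) (y t)) (mu t)
            + x t * quadForm (Gx (x t) (y t)) (mu t)) ≤ -(1 - lam t ^ 2) := by
    intro t ht
    have h0 := hT.trans ht
    have hxt := hT0 t (hTT.trans ht)
    have hxp := hxpos t h0
    have hxK : x t * K ≤ c := ((lt_div_iff₀ hK).1 hxt).le
    have h1 := (abs_le.1 (hGxbd (x t) (y t) (mu t))).1
    have h2 := hell (x t) (y t) (mu t)
    have h3 := henergy t h0
    have hS : 0 ≤ ∑ i, mu t i ^ 2 := by positivity
    have h4 := mul_le_mul_of_nonneg_left h1 hxp.le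
    have h5 := mul_le_mul_of_nonneg_right hxK hS
    nlinarith
  have hanti : ∀ a b, T ≤ a → a ≤ b → lam b ≤ lam a := by
    intro a b ha hab
    have := aux_mvt lam _ T 0 (fun t ht => hlam t (hT.trans ht))
      (fun t ht => (hder t ht).trans (by
        have := hq0 t
        have := henergy t (hT.trans ht)
        linarith)) a b ha hab
    linarith
  obtain ⟨T1, hT1, hneg⟩ : ∃ T1, T ≤ T1 ∧ lam T1 < 0 := by
    by_contra! hcon
    have hge : ∀ t, T ≤ t → x T ≤ x t := by
      intro t ht
      have := aux_mvt (fun s => -x s) (fun s => -(2 * x s * lam s)) T 0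
        (fun s hs => (hx s (hT.trans hs)).neg)
        (fun s hs => by
          have := mul_nonneg (hxpos s (hT.trans hs)).le (hcon s hs)
          nlinarith) T t le_rfl ht
      linarith
    have := ge_of_tendsto hxlim (eventually_atTop.2 ⟨T, hge⟩)
    linarith [hxpos T hT]
  have key : ∀ ε : ℝ, 0 < ε → ε < 1 → ∃ t, T1 ≤ t ∧ lam t < -1 + ε := by
    intro ε h0 h1
    by_contra! hcon
    have hd : 0 < 1 - (1 - ε) ^ 2 := by nlinarith
    have hb : 0 ≤ 1 / (1 - (1 - ε) ^ 2) := by positivity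
    have := aux_mvt lam _ T1 (-(1 - (1 - ε) ^ 2)) (fun t ht => hlam t (hT.trans (hT1.trans ht)))
      (fun t ht => (hder t (hT1.trans ht)).trans (by
        have h2 := hcon t ht
        have h3 := hanti T1 t hT1 ht
        nlinarith)) T1 (T1 + 1 / (1 - (1 - ε) ^ 2)) le_rfl (by linarith)
    have e : -(1 - (1 - ε) ^ 2) * (T1 + 1 / (1 - (1 - ε) ^ 2) - T1) = -1 := by
      field_simp
      ring
    rw [e] at this
    have := hlb (T1 + 1 / (1 - (1 - ε) ^ 2)) (by linarith)
    linarith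
  have hL : Tendsto lam atTop (nhds (-1)) := by
    rw [Metric.tendsto_atTop]
    intro ε hε
    obtain ⟨t, ht, hlt⟩ := key (min ε (1 / 2)) (by positivity)
      (lt_of_le_of_lt (min_le_right _ _) (by norm_num))
    refine ⟨t, fun s hs => ?_⟩
    have h1 := hanti t s (hT1.trans ht) hs
    have h2 := hlb s (by linarith)
    have h3 := min_le_left ε (1 / 2)
    rw [Real.dist_eq, abs_lt]
    constructor <;> linarith
  refine ⟨hL, ?_⟩
  have h : Tendsto (fun t => 1 - lam t ^ 2) atTop (nhds (1 - (-1) ^ 2)) :=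
    tendsto_const_nhds.sub (hL.pow 2)
  norm_num at h
  refine h.congr' (eventually_atTop.2 ⟨0, fun t ht => ?_⟩)
  have := henergy t ht
  linarith
end
end

section
/- Let (x, y, λ, μ) : [0,∞) → ℝ × ℝⁿ × ℝ × ℝⁿ be a C¹ solution of the geodesic Hamiltonian system such that x(t) > 0 for all t, the energy identity λ(t)² + ⟨G(x(t),y(t)) μ(t), μ(t)⟩ = 1 holds for all t ≥ 0, and x(t) → 0 as t → ∞. Then for every δ ∈ (0,1): ⟨G(x(t),y(t)) μ(t), μ(t)⟩ / x(t)^{2δ} → 0 and (1 + λ(t)) / x(t)^{2δ} → 0 as t → ∞; in particular 1 + λ(t) = O(x(t)^{2δ}) as t → ∞. -/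
open Filter Topology Set Asymptotics

noncomputable section

/-- Along any forward-complete solution of the geodesic Hamiltonian system of an
asymptotically hyperbolic metric (in 0-cotangent coordinates) with `x > 0`, satisfying the
energy identity and with `x(t) → 0`, for every `δ ∈ (0,1)` one has
`⟨Gμ,μ⟩/x^{2δ} → 0` and `(1+λ)/x^{2δ} → 0`; in particular `1 + λ = O(x^{2δ})`. -/
theorem stmt_1 (n : ℕ) (hn : 1 ≤ n)
    (G Gx : ℝ → (Fin n → ℝ) → Matrix (Fin n) (Fin n) ℝ)
    (Gy : ℝ → (Fin n → ℝ) → Fin n → Matrix (Fin n) (Fin n) ℝ)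
    (hGsymm : ∀ x y, (G x y).IsSymm)
    (c K : ℝ) (hc : 0 < c) (hK : 0 < K)
    (hell : ∀ x y (v : Fin n → ℝ), c * ∑ i, v i ^ 2 ≤ quadForm (G x y) v)
    (hGxbd : ∀ x y (v : Fin n → ℝ), |quadForm (Gx x y) v| ≤ K * ∑ i, v i ^ 2)
    (x lam : ℝ → ℝ) (y mu : ℝ → Fin n → ℝ)
    (hxpos : ∀ t : ℝ, 0 ≤ t → 0 < x t)
    (hx : ∀ t : ℝ, 0 ≤ t → HasDerivAt x (2 * x t * lam t) t)
    (hy : ∀ t : ℝ, 0 ≤ t → ∀ i, HasDerivAt (fun s => y s i)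
        (2 * x t * (G (x t) (y t)).mulVec (mu t) i) t)
    (hlam : ∀ t : ℝ, 0 ≤ t → HasDerivAt lam
        (-(2 * quadForm (G (x t) (y t)) (mu t)
            + x t * quadForm (Gx (x t) (y t)) (mu t))) t)
    (hmu : ∀ t : ℝ, 0 ≤ t → ∀ i, HasDerivAt (fun s => mu s i)
        (2 * lam t * mu t i - x t * quadForm (Gy (x t) (y t) i) (mu t)) t)
    (hchain : ∀ t : ℝ, 0 ≤ t → ∀ i j, HasDerivAt (fun s => G (x s) (y s) i j)
        (2 * x t * lam t * Gx (x t) (y t) i j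
          + ∑ k, 2 * x t * (G (x t) (y t)).mulVec (mu t) k * Gy (x t) (y t) k i j) t)
    (henergy : ∀ t : ℝ, 0 ≤ t →
        lam t ^ 2 + quadForm (G (x t) (y t)) (mu t) = 1)
    (hxlim : Tendsto x atTop (nhds 0)) :
    ∀ δ : ℝ, 0 < δ → δ < 1 →
      Tendsto (fun t => quadForm (G (x t) (y t)) (mu t) / x t ^ (2 * δ)) atTop (nhds 0) ∧
      Tendsto (fun t => (1 + lam t) / x t ^ (2 * δ)) atTop (nhds 0) ∧
      (fun t => 1 + lam t) =O[atTop] fun t => x t ^ (2 * δ) := by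
  intro δ hδ0 hδ1
  set q : ℝ → ℝ := fun t => quadForm (G (x t) (y t)) (mu t) with hq
  have hq0 : ∀ t, 0 ≤ q t := fun t =>
    le_trans (mul_nonneg hc.le (Finset.sum_nonneg fun i _ => sq_nonneg _)) (hell (x t) (y t) (mu t))
  have hqe : ∀ t, 0 ≤ t → q t = (1 - lam t) * (1 + lam t) := by
    intro t ht
    have := henergy t ht
    simp only [hq]
    linarith
  have hl : ∀ t, 0 ≤ t → -1 ≤ lam t ∧ lam t ≤ 1 := by
    intro t ht
    have h1 := hqe t ht
    have h2 := hq0 t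
    constructor <;> nlinarith
  -- eventual smallness of x
  have hev : ∀ᶠ t in atTop, x t < (1 - δ) * c / K :=
    hxlim.eventually (gt_mem_nhds (by have := sub_pos.2 hδ1; positivity))
  obtain ⟨T₀, hT₀⟩ := eventually_atTop.1 hev
  obtain ⟨T, hT0, hT⟩ : ∃ T : ℝ, 0 ≤ T ∧ ∀ t, T ≤ t → x t < (1 - δ) * c / K :=
    ⟨max T₀ 0, le_max_right _ _, fun t ht => hT₀ t (le_trans (le_max_left _ _) ht)⟩
  set L : ℝ → ℝ := fun t => -(2 * quadForm (G (x t) (y t)) (mu t)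
            + x t * quadForm (Gx (x t) (y t)) (mu t)) with hL
  have hLle : ∀ t, T ≤ t → L t ≤ -(1 + δ) * q t := by
    intro t ht
    have hx0 := hxpos t (hT0.trans ht)
    have h1 := hell (x t) (y t) (mu t)
    have h2 := (abs_le.1 (hGxbd (x t) (y t) (mu t))).1
    have h3 := hT t ht
    rw [lt_div_iff₀ hK] at h3
    have hS : 0 ≤ ∑ i, mu t i ^ 2 := Finset.sum_nonneg fun i _ => sq_nonneg _
    have h4 : -(x t * quadForm (Gx (x t) (y t)) (mu t)) ≤ x t * K * ∑ i, mu t i ^ 2 := by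
      nlinarith
    have h5 : x t * K * ∑ i, mu t i ^ 2 ≤ (1 - δ) * c * ∑ i, mu t i ^ 2 :=
      mul_le_mul_of_nonneg_right h3.le hS
    have h6 : (1 - δ) * (c * ∑ i, mu t i ^ 2) ≤ (1 - δ) * q t :=
      mul_le_mul_of_nonneg_left h1 (by linarith)
    have h7 : L t = -(2 * q t) - x t * quadForm (Gx (x t) (y t)) (mu t) := by
      simp only [hL, hq]; ring
    rw [h7]
    linarith
  have hanti : AntitoneOn lam (Ici T) := by
    apply antitoneOn_of_hasDerivWithinAt_nonpos (f' := L) (convex_Ici T)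
    · exact fun t ht => (hlam t (hT0.trans ht)).continuousAt.continuousWithinAt
    · intro t ht
      rw [interior_Ici] at ht
      exact (hlam t (hT0.trans (le_of_lt ht))).hasDerivWithinAt
    · intro t ht
      rw [interior_Ici] at ht
      have h1 := hLle t (le_of_lt ht)
      have h2 := hq0 t
      nlinarith
  obtain ⟨S, hTS, hSneg⟩ : ∃ S, T ≤ S ∧ lam S < 0 := by
    by_contra! hcon
    have hmono : MonotoneOn x (Ici T) := by
      apply monotoneOn_of_hasDerivWithinAt_nonneg (f' := fun t => 2 * x t * lam t) (convex_Ici T)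
      · exact fun t ht => (hx t (hT0.trans ht)).continuousAt.continuousWithinAt
      · intro t ht
        rw [interior_Ici] at ht
        exact (hx t (hT0.trans (le_of_lt ht))).hasDerivWithinAt
      · intro t ht
        rw [interior_Ici] at ht
        have h1 := hcon t (le_of_lt ht)
        have h2 := hxpos t (hT0.trans (le_of_lt ht))
        positivity
    have hge : x T ≤ 0 := by
      refine ge_of_tendsto hxlim ?_
      filter_upwards [eventually_ge_atTop T] with t ht
      exact hmono (mem_Ici.2 le_rfl) ht ht
    exact absurd (hxpos T hT0) (not_lt.2 hge)
  have hneg : ∀ t, S ≤ t → lam t ≤ 0 := fun t ht =>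
    (hanti (mem_Ici.2 hTS) (mem_Ici.2 (hTS.trans ht)) ht).trans hSneg.le
  have hS0 : 0 ≤ S := hT0.trans hTS
  have hder : ∀ t, 0 ≤ t → HasDerivAt (fun s => (1 + lam s) * x s ^ (-(1 + δ)))
      (L t * x t ^ (-(1 + δ)) +
        (1 + lam t) * (2 * x t * lam t * (-(1 + δ)) * x t ^ (-(1 + δ) - 1))) t := by
    intro t ht
    exact ((hlam t ht).const_add 1).mul ((hx t ht).rpow_const (Or.inl (hxpos t ht).ne'))
  have hF : AntitoneOn (fun s => (1 + lam s) * x s ^ (-(1 + δ))) (Ici S) := by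
    apply antitoneOn_of_hasDerivWithinAt_nonpos (convex_Ici S)
      (f' := fun t => L t * x t ^ (-(1 + δ)) +
        (1 + lam t) * (2 * x t * lam t * (-(1 + δ)) * x t ^ (-(1 + δ) - 1)))
    · exact fun t ht => (hder t (hS0.trans ht)).continuousAt.continuousWithinAt
    · intro t ht
      rw [interior_Ici] at ht
      exact (hder t (hS0.trans (le_of_lt ht))).hasDerivWithinAt
    · intro t ht
      rw [interior_Ici] at ht
      have hSt : S ≤ t := le_of_lt ht
      have h0 := hS0.trans hSt
      have hx0 := hxpos t h0
      have e1 : x t ^ (-(1 + δ) - 1) * x t = x t ^ (-(1 + δ)) := by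
        rw [Real.rpow_sub_one hx0.ne']
        field_simp
      have e2 : L t * x t ^ (-(1 + δ)) +
        (1 + lam t) * (2 * x t * lam t * (-(1 + δ)) * x t ^ (-(1 + δ) - 1))
          = (L t - 2 * (1 + δ) * lam t * (1 + lam t)) * x t ^ (-(1 + δ)) := by
        rw [← e1]; ring
      show L t * x t ^ (-(1 + δ)) +
        (1 + lam t) * (2 * x t * lam t * (-(1 + δ)) * x t ^ (-(1 + δ) - 1)) ≤ 0
      rw [e2]
      apply mul_nonpos_of_nonpos_of_nonneg _ (Real.rpow_nonneg hx0.le _)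
      have h1 := hLle t (hTS.trans hSt)
      rw [hqe t h0] at h1
      have h2 := (hl t h0).1
      have h3 : 0 ≤ (1 + δ) * ((1 + lam t) * (1 + lam t)) := mul_nonneg (by linarith) (mul_self_nonneg _)
      nlinarith
  set C := (1 + lam S) * x S ^ (-(1 + δ)) with hC
  have hbd : ∀ t, S ≤ t → (1 + lam t) / x t ^ (2 * δ) ≤ C * x t ^ (1 - δ) := by
    intro t ht
    have hx0 := hxpos t (hS0.trans ht)
    have h1 : (1 + lam t) * x t ^ (-(1 + δ)) ≤ C := hF (mem_Ici.2 le_rfl) (mem_Ici.2 ht) ht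
    have e : (1 + lam t) / x t ^ (2 * δ) = (1 + lam t) * x t ^ (-(1 + δ)) * x t ^ (1 - δ) := by
      rw [mul_assoc, ← Real.rpow_add hx0, div_eq_mul_inv, ← Real.rpow_neg hx0.le]
      congr 2; ring
    rw [e]
    exact mul_le_mul_of_nonneg_right h1 (Real.rpow_nonneg hx0.le _)
  have hlim0 : Tendsto (fun t => x t ^ (1 - δ)) atTop (nhds 0) := by
    have h := hxlim.rpow_const (p := 1 - δ) (Or.inr (by linarith))
    rwa [Real.zero_rpow (by linarith)] at h
  have hlim1 : Tendsto (fun t => C * x t ^ (1 - δ)) atTop (nhds 0) := by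
    simpa using hlim0.const_mul C
  have hlw : Tendsto (fun t => (1 + lam t) / x t ^ (2 * δ)) atTop (nhds 0) := by
    refine tendsto_of_tendsto_of_tendsto_of_le_of_le' tendsto_const_nhds hlim1 ?_ ?_
    · filter_upwards [eventually_ge_atTop 0] with t ht
      exact div_nonneg (by linarith [(hl t ht).1]) (Real.rpow_nonneg (hxpos t ht).le _)
    · filter_upwards [eventually_ge_atTop S] with t ht
      exact hbd t ht
  refine ⟨?_, hlw, ?_⟩
  · have h2 : Tendsto (fun t => 2 * ((1 + lam t) / x t ^ (2 * δ))) atTop (nhds 0) := by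
      simpa using hlw.const_mul 2
    refine tendsto_of_tendsto_of_tendsto_of_le_of_le' tendsto_const_nhds h2 ?_ ?_
    · filter_upwards [eventually_ge_atTop 0] with t ht
      exact div_nonneg (hq0 t) (Real.rpow_nonneg (hxpos t ht).le _)
    · filter_upwards [eventually_ge_atTop 0] with t ht
      rw [← mul_div_assoc]
      apply div_le_div_of_nonneg_right _ (Real.rpow_nonneg (hxpos t ht).le _)
      change q t ≤ _
      rw [hqe t ht]
      have := hl t ht
      nlinarith
  · refine IsLittleO.isBigO ((isLittleO_iff_tendsto' ?_).2 hlw)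
    filter_upwards [eventually_ge_atTop 0] with t ht h
    exact absurd h (Real.rpow_pos_of_pos (hxpos t ht) _).ne'
end
end

section
/- At every point (x,y,ξ,η) ∈ ℝ × ℝⁿ × ℝ × ℝⁿ with x > 0 and p̃(x,y,ξ,η) = 0, the Hamiltonian vector field satisfies H_{p̃}(x,y,ξ,η) = x · V(x,y,ξ,η), where V(x,y,ξ,η) = (2xξ − 2, 2x G(x,y)η, −ξ² − ⟨G(x,y)η,η⟩ − x⟨∂ₓG(x,y)η,η⟩, (−x⟨∂_{yᵢ}G(x,y)η,η⟩)ᵢ). In particular V is a C⁰ (indeed as smooth as G) vector field on all of ℝ × ℝⁿ × ℝ × ℝⁿ whose ∂/∂x-component at x = 0 equals −2; hence the rescaled Hamilton vector field x⁻¹H_{p̃}, restricted to {p̃ = 0, x > 0}, extends across and is transverse to the boundary {x = 0}. -/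
open Filter Topology Set

noncomputable section

theorem quadForm_hasDerivAt_matrix {n : ℕ} (A : ℝ → Matrix (Fin n) (Fin n) ℝ)
    (A' : Matrix (Fin n) (Fin n) ℝ) (t : ℝ) (v : Fin n → ℝ)
    (h : ∀ i j, HasDerivAt (fun s => A s i j) (A' i j) t) :
    HasDerivAt (fun s => quadForm (A s) v) (quadForm A' v) t := by
  unfold quadForm
  refine HasDerivAt.fun_sum fun i _ => HasDerivAt.fun_sum fun j _ => ?_
  exact ((h i j).mul_const _).mul_const _

theorem quadForm_hasDerivAt_vec {n : ℕ} (A : Matrix (Fin n) (Fin n) ℝ) (hA : A.IsSymm)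
    (v : Fin n → ℝ) (k : Fin n) :
    HasDerivAt (fun s => quadForm A (Function.update v k s)) (2 * A.mulVec v k) (v k) := by
  have hu : ∀ i, HasDerivAt (fun s => Function.update v k s i)
      ((Pi.single k (1 : ℝ) : Fin n → ℝ) i) (v k) := by
    intro i
    exact (hasDerivAt_pi.1 (hasDerivAt_update v k (v k))) i
  have h : HasDerivAt (fun s => quadForm A (Function.update v k s))
      (∑ i, ∑ j, (A i j * (Pi.single k (1 : ℝ) : Fin n → ℝ) i * v j
        + A i j * v i * (Pi.single k (1 : ℝ) : Fin n → ℝ) j)) (v k) := by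
    unfold quadForm
    refine HasDerivAt.fun_sum fun i _ => HasDerivAt.fun_sum fun j _ => ?_
    have := ((hu i).const_mul (A i j)).fun_mul (hu j)
    simpa only [Function.update_eq_self] using this
  convert h using 1
  simp only [Finset.sum_add_distrib]
  have h1 : ∑ i, ∑ j, A i j * (Pi.single k (1 : ℝ) : Fin n → ℝ) i * v j = A.mulVec v k := by
    rw [Finset.sum_comm]
    simp [Pi.single_apply, Matrix.mulVec, dotProduct]
  have h2 : ∑ i, ∑ j, A i j * v i * (Pi.single k (1 : ℝ) : Fin n → ℝ) j = A.mulVec v k := by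
    simp only [Pi.single_apply, Matrix.mulVec, dotProduct, mul_ite, mul_one, mul_zero,
      Finset.sum_ite_eq', Finset.mem_univ, if_true]
    exact Finset.sum_congr rfl fun i _ => by rw [hA.apply]
  rw [h1, h2]; ring

theorem quadForm_continuous {X : Type*} [TopologicalSpace X] {n : ℕ}
    {A : X → Matrix (Fin n) (Fin n) ℝ} {v : X → Fin n → ℝ}
    (hA : Continuous A) (hv : Continuous v) : Continuous fun q => quadForm (A q) (v q) := by
  unfold quadForm
  refine continuous_finsetSum _ fun i _ => continuous_finsetSum _ fun j _ => ?_
  exact ((hA.matrix_elem i j).mul ((continuous_apply i).comp hv)).mul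
    ((continuous_apply j).comp hv)

/-- On the shifted characteristic variety `{p̃ = 0, x > 0}` of the shifted semiclassical
Hamiltonian `p̃ = (xξ)² − 2xξ + x²⟨G(x,y)η,η⟩`, the Hamilton vector field factors as
`H_{p̃} = x · V` with `V` a continuous vector field on all of ℝ × ℝⁿ × ℝ × ℝⁿ whose
`∂/∂x`-component at `x = 0` equals `−2`; hence `x⁻¹H_{p̃}` extends across and is transverse
to the boundary `{x = 0}`. -/
theorem stmt_4 (n : ℕ) (hn : 1 ≤ n)
    (G Gx : ℝ → (Fin n → ℝ) → Matrix (Fin n) (Fin n) ℝ)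
    (Gy : ℝ → (Fin n → ℝ) → Fin n → Matrix (Fin n) (Fin n) ℝ)
    (hGsymm : ∀ x y, (G x y).IsSymm)
    (hGx : ∀ x y i j, HasDerivAt (fun s => G s y i j) (Gx x y i j) x)
    (hGy : ∀ (x : ℝ) (y : Fin n → ℝ) (k i j : Fin n),
        HasDerivAt (fun v => G x (Function.update y k v) i j) (Gy x y k i j) (y k))
    (hGc : Continuous fun p : ℝ × (Fin n → ℝ) => G p.1 p.2)
    (hGxc : Continuous fun p : ℝ × (Fin n → ℝ) => Gx p.1 p.2)
    (hGyc : ∀ k, Continuous fun p : ℝ × (Fin n → ℝ) => Gy p.1 p.2 k)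
    (pt : ℝ → (Fin n → ℝ) → ℝ → (Fin n → ℝ) → ℝ)
    (hpt : ∀ x y ξ η, pt x y ξ η = (x * ξ) ^ 2 - 2 * (x * ξ) + x ^ 2 * quadForm (G x y) η)
    (V : ℝ → (Fin n → ℝ) → ℝ → (Fin n → ℝ) → ℝ × (Fin n → ℝ) × ℝ × (Fin n → ℝ))
    (hV : ∀ x y ξ η, V x y ξ η =
      (2 * x * ξ - 2,
       fun i => 2 * x * (G x y).mulVec η i,
       -ξ ^ 2 - quadForm (G x y) η - x * quadForm (Gx x y) η,
       fun i => -(x * quadForm (Gy x y i) η))) :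
    (∀ (x : ℝ) (y : Fin n → ℝ) (ξ : ℝ) (η : Fin n → ℝ), 0 < x → pt x y ξ η = 0 →
      HasDerivAt (fun s => pt x y s η) (x * (V x y ξ η).1) ξ ∧
      (∀ i, HasDerivAt (fun v => pt x y ξ (Function.update η i v))
        (x * (V x y ξ η).2.1 i) (η i)) ∧
      HasDerivAt (fun s => pt s y ξ η) (-(x * (V x y ξ η).2.2.1)) x ∧
      (∀ i, HasDerivAt (fun v => pt x (Function.update y i v) ξ η)
        (-(x * (V x y ξ η).2.2.2 i)) (y i)))
    ∧ Continuous (fun q : ℝ × (Fin n → ℝ) × ℝ × (Fin n → ℝ) => V q.1 q.2.1 q.2.2.1 q.2.2.2)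
    ∧ (∀ (y : Fin n → ℝ) (ξ : ℝ) (η : Fin n → ℝ), (V 0 y ξ η).1 = -2) := by
  refine ⟨?_, ?_, ?_⟩
  · intro x y ξ η hx h0
    rw [hpt] at h0
    simp only [hV, hpt]
    refine ⟨?_, ?_, ?_, ?_⟩
    · have h := (hasDerivAt_id ξ).const_mul x
      have := ((h.pow 2).sub (h.const_mul 2)).add_const (x ^ 2 * quadForm (G x y) η)
      refine HasDerivAt.congr_deriv (f' := _) this ?_
      simp; ring
    · intro i
      have := ((quadForm_hasDerivAt_vec (G x y) (hGsymm x y) η i).const_mul (x ^ 2)).const_add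
        ((x * ξ) ^ 2 - 2 * (x * ξ))
      refine HasDerivAt.congr_deriv (f' := _) this ?_
      ring
    · have h := (hasDerivAt_id x).mul_const ξ
      have hq := quadForm_hasDerivAt_matrix (fun s => G s y) (Gx x y) x η (hGx x y)
      have := ((h.pow 2).sub (h.const_mul 2)).add (((hasDerivAt_id x).pow 2).mul hq)
      refine HasDerivAt.congr_deriv (f' := _) this ?_
      have h1 : x * ξ ^ 2 - 2 * ξ + x * quadForm (G x y) η = 0 := by
        apply mul_left_cancel₀ hx.ne'
        linarith
      simp
      linear_combination h1
    · intro i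
      have hq := quadForm_hasDerivAt_matrix (fun s => G x (Function.update y i s)) (Gy x y i)
        (y i) η (hGy x y i)
      have := (hq.const_mul (x ^ 2)).const_add ((x * ξ) ^ 2 - 2 * (x * ξ))
      refine HasDerivAt.congr_deriv (f' := _) this ?_
      ring
  · simp only [hV]
    have hp : Continuous fun q : ℝ × (Fin n → ℝ) × ℝ × (Fin n → ℝ) => (q.1, q.2.1) := by fun_prop
    have hη : Continuous fun q : ℝ × (Fin n → ℝ) × ℝ × (Fin n → ℝ) => q.2.2.2 := by fun_prop
    have hG' := hGc.comp hp
    have h1 := quadForm_continuous hG' hη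
    have h2 := quadForm_continuous (hGxc.comp hp) hη
    have h3 := fun k => quadForm_continuous ((hGyc k).comp hp) hη
    have h4 := hG'.matrix_mulVec hη
    simp only [Function.comp_def] at h1 h2 h3 h4
    refine Continuous.prodMk (by fun_prop) (Continuous.prodMk ?_ (Continuous.prodMk ?_ ?_))
    · refine continuous_pi fun i => ?_
      exact (continuous_const.mul continuous_fst).mul ((continuous_apply i).comp h4)
    · exact ((by fun_prop : Continuous fun q : ℝ × (Fin n → ℝ) × ℝ × (Fin n → ℝ) =>
        -q.2.2.1 ^ 2).sub h1).sub (continuous_fst.mul h2)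
    · refine continuous_pi fun i => ?_
      exact (continuous_fst.mul (h3 i)).neg
  · intro y ξ η
    simp [hV]
end
end

section
/- Let n ≥ 1 and let M : [0, r₀) → (n+1)×(n+1) real matrices be a C¹ family. Write the columns of M(r) as v(r), C₁(r), …, Cₙ(r), assume C₁(0) = ⋯ = Cₙ(0) = 0, and assume the matrix with columns v(0), C₁′(0), …, Cₙ′(0) is invertible. Then there exist constants c, C > 0 and r₁ ∈ (0, r₀) such that c·rⁿ ≤ |det M(r)| ≤ C·rⁿ for all r ∈ (0, r₁). -/
open Filter Topology Set

noncomputable section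

/-- Quantitative rank-drop estimate: if `M : [0, r₀) → Mat_{(n+1)×(n+1)}(ℝ)` is a C¹ family
whose columns are `v(r), C₁(r), …, Cₙ(r)` with `Cⱼ(0) = 0` and with the matrix having
columns `v(0), C₁′(0), …, Cₙ′(0)` invertible, then `|det M(r)| ≍ rⁿ` for small `r > 0`. -/
theorem stmt_6 (n : ℕ) (hn : 1 ≤ n) (r₀ : ℝ) (hr₀ : 0 < r₀)
    (M M' : ℝ → Matrix (Fin (n + 1)) (Fin (n + 1)) ℝ)
    (hderiv : ∀ r ∈ Set.Ico (0 : ℝ) r₀, ∀ i j,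
        HasDerivWithinAt (fun s => M s i j) (M' r i j) (Set.Ico (0 : ℝ) r₀) r)
    (hcont : ∀ i j, ContinuousOn (fun r => M' r i j) (Set.Ico (0 : ℝ) r₀))
    (hcol0 : ∀ (i : Fin (n + 1)) (j : Fin n), M 0 i j.succ = 0)
    (hinv : (Matrix.of fun i j : Fin (n + 1) =>
        if j = 0 then M 0 i j else M' 0 i j).det ≠ 0) :
    ∃ c C r₁ : ℝ, 0 < c ∧ 0 < C ∧ 0 < r₁ ∧ r₁ < r₀ ∧
      ∀ r : ℝ, 0 < r → r < r₁ →
        c * r ^ n ≤ |(M r).det| ∧ |(M r).det| ≤ C * r ^ n := by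
  set L : Matrix (Fin (n + 1)) (Fin (n + 1)) ℝ :=
    Matrix.of fun i j : Fin (n + 1) => if j = 0 then M 0 i j else M' 0 i j with hL
  let N : ℝ → Matrix (Fin (n + 1)) (Fin (n + 1)) ℝ := fun r =>
    Matrix.of fun i j : Fin (n + 1) => if j = 0 then M r i j else r⁻¹ * M r i j
  have h0 : (0 : ℝ) ∈ Set.Ico (0 : ℝ) r₀ := ⟨le_refl _, hr₀⟩
  have hle : 𝓝[>] (0 : ℝ) = 𝓝[Set.Ioo 0 r₀] 0 := (nhdsWithin_Ioo_eq_nhdsGT hr₀).symm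
  have hN : Tendsto N (𝓝[>] 0) (𝓝 L) := by
    refine tendsto_pi_nhds.2 fun i => tendsto_pi_nhds.2 fun j => ?_
    by_cases hj : j = 0
    · have h1 := (hderiv 0 h0 i j).continuousWithinAt
      have h2 : Tendsto (fun s => M s i j) (𝓝[>] 0) (𝓝 (M 0 i j)) := by
        rw [hle]
        exact h1.mono_left (nhdsWithin_mono _ Ioo_subset_Ico_self)
      simpa [N, hL, hj] using h2
    · have h1 := hasDerivWithinAt_iff_tendsto_slope.1 (hderiv 0 h0 i j)
      have h2 : Tendsto (slope (fun s => M s i j) 0) (𝓝[>] 0) (𝓝 (M' 0 i j)) := by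
        rw [hle]
        refine h1.mono_left (nhdsWithin_mono _ ?_)
        intro x hx
        exact ⟨Ioo_subset_Ico_self hx, ne_of_gt hx.1⟩
      obtain ⟨k, rfl⟩ := Fin.exists_succ_eq.2 hj
      refine (h2.congr ?_).trans (le_of_eq ?_)
      · intro r
        simp [N, slope_def_field, hcol0, div_eq_inv_mul]
      · simp [hL]
  have hdet : Tendsto (fun r => |(N r).det|) (𝓝[>] 0) (𝓝 |L.det|) :=
    (((continuous_id.matrix_det).tendsto L).comp hN).abs
  have hpos : 0 < |L.det| := abs_pos.2 hinv
  have hev := (hdet.eventually (lt_mem_nhds (half_lt_self hpos))).and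
    (hdet.eventually (gt_mem_nhds (lt_add_one |L.det|)))
  obtain ⟨u, hu, hsub⟩ := (mem_nhdsGT_iff_exists_Ioo_subset).1 hev
  have hu0 : 0 < u := hu
  refine ⟨|L.det| / 2, |L.det| + 1, min u (r₀ / 2), by positivity, by positivity,
    lt_min hu0 (by positivity), (min_le_right _ _).trans_lt (half_lt_self hr₀), ?_⟩
  intro r hr hr1
  obtain ⟨ha, hb⟩ := hsub ⟨hr, hr1.trans_le (min_le_left _ _)⟩
  have hM : M r = Matrix.of fun i j => (if j = 0 then (1 : ℝ) else r) * N r i j := by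
    ext i j
    by_cases hj : j = 0
    · simp [N, hj]
    · simp [N, hj, hr.ne']
  have hd : (M r).det = r ^ n * (N r).det := by
    rw [hM, Matrix.det_mul_row, Fin.prod_univ_succ]
    simp [Fin.succ_ne_zero]
  have hrn : 0 < r ^ n := pow_pos hr n
  rw [hd, abs_mul, abs_of_pos hrn, mul_comm (r ^ n)]
  exact ⟨mul_le_mul_of_nonneg_right ha.le hrn.le, mul_le_mul_of_nonneg_right hb.le hrn.le⟩
end
end

section
/- Let r₀ ∈ (0, π) and let a, b : [0, π] → ℝ be C¹ functions with a(0) = b(0) = r₀ satisfying a′(t) = sin(a(t)/2)·cos(b(t)/2) and b′(t) = −sin(a(t)/2)·cos(b(t)/2) for all t ∈ [0, π]. Then there exists t ∈ [0, π] with a(t) ≥ π or b(t) ≤ 0. (In particular, every such flow line exits the model region {0 < b ≤ a < π} within the uniformly bounded time π.) -/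
open Filter Topology Set

noncomputable section

/-- Uniform finite exit time for flow lines on the model leaf of the bicharacteristic
flowout at the front face: if `a, b` are C¹ on `[0, π]` with `a(0) = b(0) = r₀ ∈ (0, π)`,
`a′ = sin(a/2)cos(b/2)` and `b′ = −sin(a/2)cos(b/2)`, then at some time `t ∈ [0, π]`
either `a(t) ≥ π` or `b(t) ≤ 0`. -/
theorem stmt_8 (r₀ : ℝ) (hr₀ : r₀ ∈ Set.Ioo 0 Real.pi)
    (a b : ℝ → ℝ) (ha0 : a 0 = r₀) (hb0 : b 0 = r₀)
    (ha : ∀ t ∈ Set.Icc (0 : ℝ) Real.pi,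
        HasDerivWithinAt a (Real.sin (a t / 2) * Real.cos (b t / 2))
          (Set.Icc (0 : ℝ) Real.pi) t)
    (hb : ∀ t ∈ Set.Icc (0 : ℝ) Real.pi,
        HasDerivWithinAt b (-(Real.sin (a t / 2) * Real.cos (b t / 2)))
          (Set.Icc (0 : ℝ) Real.pi) t) :
    ∃ t ∈ Set.Icc (0 : ℝ) Real.pi, Real.pi ≤ a t ∨ b t ≤ 0 := by
  by_contra hcon
  push Not at hcon
  obtain ⟨h0, h1⟩ := hr₀
  have hpi := Real.pi_pos
  have hca : ContinuousOn a (Icc 0 Real.pi) := fun t ht => (ha t ht).continuousWithinAt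
  have hcb : ContinuousOn b (Icc 0 Real.pi) := fun t ht => (hb t ht).continuousWithinAt
  have hra : ∀ t ∈ Ico (0 : ℝ) Real.pi,
      HasDerivWithinAt a (Real.sin (a t / 2) * Real.cos (b t / 2)) (Ici t) t :=
    fun t ht => (ha t (Ico_subset_Icc_self ht)).mono_of_mem_nhdsWithin
      (Icc_mem_nhdsGE_of_mem ht)
  have hrb : ∀ t ∈ Ico (0 : ℝ) Real.pi,
      HasDerivWithinAt b (-(Real.sin (a t / 2) * Real.cos (b t / 2))) (Ici t) t :=
    fun t ht => (hb t (Ico_subset_Icc_self ht)).mono_of_mem_nhdsWithin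
      (Icc_mem_nhdsGE_of_mem ht)
  have hsum : ∀ t ∈ Icc (0 : ℝ) Real.pi, b t = 2 * r₀ - a t := by
    intro t ht
    have := constant_of_has_deriv_right_zero (hca.add hcb) (fun x hx => by
      simpa using (hra x hx).add (hrb x hx)) t ht
    simp only [Pi.add_apply] at this
    linarith
  have hrhs : ∀ t ∈ Icc (0 : ℝ) Real.pi, Real.sin (a t / 2) * Real.cos (b t / 2)
      = (Real.sin r₀ + Real.sin (a t - r₀)) / 2 := by
    intro t ht
    rw [hsum t ht]
    have e1 : r₀ = a t / 2 + (2 * r₀ - a t) / 2 := by ring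
    have e2 : a t - r₀ = a t / 2 - (2 * r₀ - a t) / 2 := by ring
    have e3 : Real.sin r₀ = Real.sin (a t / 2 + (2 * r₀ - a t) / 2) := by rw [← e1]
    rw [e2, e3, Real.sin_add, Real.sin_sub]
    ring
  have hS : 0 < Real.sin r₀ := Real.sin_pos_of_pos_of_lt_pi h0 h1
  have hge : ∀ t ∈ Icc (0 : ℝ) Real.pi, r₀ ≤ a t := by
    intro t ht
    refine image_le_of_deriv_right_lt_deriv_boundary' (f := fun _ => r₀) (f' := fun _ => 0)
      continuousOn_const (fun x _ => hasDerivWithinAt_const _ _ _) ha0.ge hca hra ?_ ht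
    intro x hx hxe
    rw [hrhs x (Ico_subset_Icc_self hx), ← hxe]
    simp only [sub_self, Real.sin_zero]
    linarith
  have key : ∀ m : ℝ, 2 * m / Real.pi ≤ Real.sin r₀ → r₀ + m ≤ a Real.pi := by
    intro m hm
    have := image_le_of_deriv_right_le_deriv_boundary (f := fun t => r₀ + t * (m / Real.pi))
      (f' := fun _ => m / Real.pi) (a := 0) (b := Real.pi) (by fun_prop)
      (fun x _ => by
        simpa using (((hasDerivAt_id x).mul_const (m / Real.pi)).const_add r₀).hasDerivWithinAt)
      (by simp [ha0]) hca hra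
      (fun x hx => by
        have hx' := Ico_subset_Icc_self hx
        rw [hrhs x hx']
        have h2 := hge x hx'
        have h3 := (hcon x hx').1
        have : 0 ≤ Real.sin (a x - r₀) :=
          Real.sin_nonneg_of_nonneg_of_le_pi (by linarith) (by linarith)
        have e : 2 * m / Real.pi = 2 * (m / Real.pi) := by ring
        linarith) (right_mem_Icc.2 hpi.le)
    have e : Real.pi * (m / Real.pi) = m := by field_simp
    simpa only [e] using this
  have hP := hcon Real.pi (right_mem_Icc.2 hpi.le)
  have hs := hsum Real.pi (right_mem_Icc.2 hpi.le)
  rcases le_total r₀ (Real.pi / 2) with h | h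
  · have := key r₀ (by
      have := Real.mul_le_sin h0.le h
      calc 2 * r₀ / Real.pi = 2 / Real.pi * r₀ := by ring
        _ ≤ _ := this)
    linarith [hP.2]
  · have := key (Real.pi - r₀) (by
      have := Real.mul_le_sin (x := Real.pi - r₀) (by linarith) (by linarith)
      rw [Real.sin_pi_sub] at this
      calc 2 * (Real.pi - r₀) / Real.pi = 2 / Real.pi * (Real.pi - r₀) := by ring
        _ ≤ _ := this)
    linarith [hP.1]
end
end

section
/- Let n ≥ 1 be an integer, h > 0, and let g^{ij} : (0,∞) × ℝⁿ → ℝ (1 ≤ i, j ≤ n) be continuous functions. For u : (0,∞) × ℝⁿ → ℂ smooth (C²), define (P u)(x,y) = −h²(x∂ₓ)²u + n h² x ∂ₓu − h² x² Σ_{i,j} g^{ij}(x,y) ∂_{yᵢ}∂_{yⱼ}u − (h² n²/4 + 1) u. Then for every such u and every (x, y) with x > 0, writing x^{α} = exp(α log x) for complex α: x^{−n/2 − 1 + i/h} · P(x^{n/2 − i/h} u)(x,y) = 2ih ∂ₓu(x,y) − h² ∂ₓ(x ∂ₓu)(x,y) − h² x Σ_{i,j} g^{ij}(x,y) ∂_{yᵢ}∂_{yⱼ}u(x,y).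 In particular all negative powers of x and all zeroth-order terms cancel exactly. -/
open Filter Topology Set Complex

noncomputable section

/-- The key cancellation identity for the model semiclassical operator
`P = −h²(x∂ₓ)² + nh²x∂ₓ − h²x²Σ gⁱʲ∂_{yᵢ}∂_{yⱼ} − (h²n²/4 + 1)` on an asymptotically
hyperbolic space: conjugating by `x^{n/2 − i/h}` and rescaling by `x^{-1}`,
`x^{−n/2−1+i/h} · P(x^{n/2−i/h} u) = 2ih ∂ₓu − h²∂ₓ(x∂ₓu) − h²xΣ gⁱʲ∂_{yᵢ}∂_{yⱼ}u`;
all negative powers of `x` and all zeroth order terms cancel exactly.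
Here `w = x^{n/2 − i/h} u` and `ux, uxx, uy, uyy, wx, wxx, wy, wyy` are the indicated
partial derivatives of `u` and of `w`. -/
theorem stmt_9 (n : ℕ) (hn : 1 ≤ n) (h : ℝ) (hh : 0 < h)
    (g : ℝ → (Fin n → ℝ) → Fin n → Fin n → ℝ)
    (hg : ∀ i j, ContinuousOn (fun p : ℝ × (Fin n → ℝ) => g p.1 p.2 i j)
        {p : ℝ × (Fin n → ℝ) | 0 < p.1})
    (u ux uxx : ℝ → (Fin n → ℝ) → ℂ)
    (uy : ℝ → (Fin n → ℝ) → Fin n → ℂ)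
    (uyy : ℝ → (Fin n → ℝ) → Fin n → Fin n → ℂ)
    (hux : ∀ (x : ℝ) (y : Fin n → ℝ), 0 < x → HasDerivAt (fun s => u s y) (ux x y) x)
    (huxx : ∀ (x : ℝ) (y : Fin n → ℝ), 0 < x → HasDerivAt (fun s => ux s y) (uxx x y) x)
    (huy : ∀ (x : ℝ) (y : Fin n → ℝ) (i : Fin n), 0 < x →
        HasDerivAt (fun v => u x (Function.update y i v)) (uy x y i) (y i))
    (huyy : ∀ (x : ℝ) (y : Fin n → ℝ) (i j : Fin n), 0 < x →
        HasDerivAt (fun v => uy x (Function.update y j v) i) (uyy x y i j) (y j))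
    (w wx wxx : ℝ → (Fin n → ℝ) → ℂ)
    (wy : ℝ → (Fin n → ℝ) → Fin n → ℂ)
    (wyy : ℝ → (Fin n → ℝ) → Fin n → Fin n → ℂ)
    (hw : ∀ (x : ℝ) (y : Fin n → ℝ), 0 < x →
        w x y = (x : ℂ) ^ ((n : ℂ) / 2 - Complex.I / (h : ℂ)) * u x y)
    (hwx : ∀ (x : ℝ) (y : Fin n → ℝ), 0 < x → HasDerivAt (fun s => w s y) (wx x y) x)
    (hwxx : ∀ (x : ℝ) (y : Fin n → ℝ), 0 < x → HasDerivAt (fun s => wx s y) (wxx x y) x)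
    (hwy : ∀ (x : ℝ) (y : Fin n → ℝ) (i : Fin n), 0 < x →
        HasDerivAt (fun v => w x (Function.update y i v)) (wy x y i) (y i))
    (hwyy : ∀ (x : ℝ) (y : Fin n → ℝ) (i j : Fin n), 0 < x →
        HasDerivAt (fun v => wy x (Function.update y j v) i) (wyy x y i j) (y j)) :
    ∀ (x : ℝ) (y : Fin n → ℝ), 0 < x →
      (x : ℂ) ^ (-(n : ℂ) / 2 - 1 + Complex.I / (h : ℂ)) *
        (-(h : ℂ) ^ 2 * ((x : ℂ) * wx x y + (x : ℂ) ^ 2 * wxx x y)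
          + (n : ℂ) * (h : ℂ) ^ 2 * ((x : ℂ) * wx x y)
          - (h : ℂ) ^ 2 * (x : ℂ) ^ 2 * ∑ i, ∑ j, (g x y i j : ℂ) * wyy x y i j
          - ((h : ℂ) ^ 2 * (n : ℂ) ^ 2 / 4 + 1) * w x y)
      = 2 * Complex.I * (h : ℂ) * ux x y
          - (h : ℂ) ^ 2 * (ux x y + (x : ℂ) * uxx x y)
          - (h : ℂ) ^ 2 * (x : ℂ) * ∑ i, ∑ j, (g x y i j : ℂ) * uyy x y i j := by
  intro x y hx
  have hne : ∀ s : ℝ, 0 < s → (s : ℂ) ≠ 0 := fun s hs => by exact_mod_cast hs.ne'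
  have hh0 : (h : ℂ) ≠ 0 := hne h hh
  obtain ⟨a, ha⟩ : ∃ a : ℂ, a = (n : ℂ) / 2 - Complex.I / (h : ℂ) := ⟨_, rfl⟩
  rw [← ha] at hw
  have hc : ∀ s : ℝ, 0 < s →
      HasDerivAt (fun t : ℝ => (t : ℂ) ^ a) (a * (s : ℂ) ^ a / (s : ℂ)) s := by
    intro s hs
    have h1 : HasDerivAt (fun z : ℂ => z ^ a) (a * (s : ℂ) ^ (a - 1) * 1) (s : ℂ) :=
      (hasDerivAt_id (s : ℂ)).cpow_const (Or.inl (by simpa using hs))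
    have h2 := h1.comp_ofReal
    rw [Complex.cpow_sub _ _ (hne s hs), Complex.cpow_one, mul_one, ← mul_div_assoc] at h2
    exact h2
  have ewx : ∀ s : ℝ, 0 < s →
      wx s y = a * (s : ℂ) ^ a / (s : ℂ) * u s y + (s : ℂ) ^ a * ux s y := by
    intro s hs
    have h1 := (hc s hs).mul (hux s y hs)
    refine (hwx s y hs).unique (h1.congr_of_eventuallyEq ?_)
    filter_upwards [lt_mem_nhds hs] with t ht
    exact hw t y ht
  have ewxx : wxx x y = (a * (a * (x : ℂ) ^ a / (x : ℂ)) * x - a * (x : ℂ) ^ a * 1) / (x : ℂ) ^ 2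
        * u x y + a * (x : ℂ) ^ a / (x : ℂ) * ux x y
      + (a * (x : ℂ) ^ a / (x : ℂ) * ux x y + (x : ℂ) ^ a * uxx x y) := by
    have hid : HasDerivAt (fun t : ℝ => (t : ℂ)) 1 x := (hasDerivAt_id (x : ℂ)).comp_ofReal
    have h1 := (((((hc x hx).const_mul a).div hid (hne x hx))).mul (hux x y hx)).add
      ((hc x hx).mul (huxx x y hx))
    refine (hwxx x y hx).unique (h1.congr_of_eventuallyEq ?_)
    filter_upwards [lt_mem_nhds hx] with t ht
    exact ewx t ht
  have ewy : ∀ (z : Fin n → ℝ) i, wy x z i = (x : ℂ) ^ a * uy x z i := by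
    intro z i
    refine (hwy x z i hx).unique (((huy x z i hx).const_mul ((x : ℂ) ^ a)).congr_of_eventuallyEq ?_)
    exact Filter.Eventually.of_forall fun v => hw x _ hx
  have ewyy : ∀ i j, wyy x y i j = (x : ℂ) ^ a * uyy x y i j := by
    intro i j
    refine (hwyy x y i j hx).unique
      (((huyy x y i j hx).const_mul ((x : ℂ) ^ a)).congr_of_eventuallyEq ?_)
    exact Filter.Eventually.of_forall fun v => ewy _ i
  have esum : ∑ i, ∑ j, (g x y i j : ℂ) * wyy x y i j
      = (x : ℂ) ^ a * ∑ i, ∑ j, (g x y i j : ℂ) * uyy x y i j := by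
    simp only [Finset.mul_sum, ewyy]
    exact Finset.sum_congr rfl fun i _ => Finset.sum_congr rfl fun j _ => by ring
  have hx0 := hne x hx
  have hca : (x : ℂ) ^ a ≠ 0 := by simp [Complex.cpow_eq_zero_iff, hx0]
  have epow : (x : ℂ) ^ (-(n : ℂ) / 2 - 1 + Complex.I / (h : ℂ)) = ((x : ℂ) ^ a)⁻¹ / x := by
    rw [show -(n : ℂ) / 2 - 1 + Complex.I / (h : ℂ) = -a - 1 by rw [ha]; ring,
      Complex.cpow_sub _ _ hx0, Complex.cpow_neg, Complex.cpow_one]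
  rw [epow, esum, ewxx, ewx x hx, hw x y hx]
  generalize ∑ i, ∑ j, (g x y i j : ℂ) * uyy x y i j = S
  generalize (x : ℂ) ^ a = c at hca
  have hn2 : (n : ℂ) = 2 * a + 2 * Complex.I / h := by rw [ha]; ring
  rw [hn2]
  generalize ux x y = p
  generalize uxx x y = q
  generalize u x y = r
  field_simp
  ring_nf
  simp only [Complex.I_sq]
  ring
end
end

section
/- For every integer n ≥ 1 there exists a constant C > 0 such that for all r ∈ (0, 1], the integral ∫_{cosh r}^{∞} (cosh r)^{n/2} · (s + 1)^{−n/2} · (s − 1)^{−n/2} · (s − cosh r)^{−1/2} ds is finite and is at most C · r^{−n}. -/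
open MeasureTheory

noncomputable section

/-- The dominating profile. -/
def domH (u : ℝ) : ℝ :=
  (Set.Ioc (0:ℝ) 1).indicator (fun u => u ^ (-(1:ℝ)/2)) u +
    (Set.Ioi (1:ℝ)).indicator (fun u => u ^ (-(3:ℝ)/2)) u

lemma domH_nonneg (u : ℝ) : 0 ≤ domH u := by
  unfold domH
  refine add_nonneg (Set.indicator_nonneg ?_ u) (Set.indicator_nonneg ?_ u)
  · intro x hx
    exact Real.rpow_nonneg hx.1.le _
  · intro x hx
    have : (1:ℝ) < x := hx
    exact Real.rpow_nonneg (by linarith) _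

lemma domH_integrable : Integrable domH := by
  unfold domH
  refine Integrable.add ?_ ?_
  · rw [integrable_indicator_iff measurableSet_Ioc]
    have := (intervalIntegral.intervalIntegrable_rpow' (a := 0) (b := 1)
      (r := -(1:ℝ)/2) (by norm_num))
    rwa [intervalIntegrable_iff_integrableOn_Ioc_of_le zero_le_one] at this
  · rw [integrable_indicator_iff measurableSet_Ioi]
    exact integrableOn_Ioi_rpow_of_lt (by norm_num) one_pos

lemma sq_le_cosh_sub {r : ℝ} : r ^ 2 / 2 ≤ Real.cosh r - 1 := by
  have h := Real.cosh_sq (r/2)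
  have h2 := Real.cosh_two_mul (r/2)
  have h3 : (r/2)^2 ≤ Real.sinh (r/2) ^ 2 := by
    rw [sq_le_sq]
    rw [Real.abs_sinh]
    exact Real.self_le_sinh_iff.2 (abs_nonneg _)
  rw [show 2 * (r/2) = r by ring] at h2
  nlinarith

lemma key_bound (n : ℕ) (hn : 1 ≤ n) {r s : ℝ} (hr : 0 < r) (hr1 : r ≤ 1)
    (hs : Real.cosh r < s) :
    Real.cosh r ^ ((n : ℝ) / 2) * (s + 1) ^ (-(n : ℝ) / 2) *
            (s - 1) ^ (-(n : ℝ) / 2) * (s - Real.cosh r) ^ (-(1 : ℝ) / 2) ≤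
      (((2:ℝ) ^ ((n:ℝ)/2) + Real.cosh 1 ^ ((n:ℝ)/2)) * r ^ (-(n:ℝ))) *
        domH (s - Real.cosh r) := by
  have hsq := sq_le_cosh_sub (r := r)
  have hc1 : 1 ≤ Real.cosh r := Real.one_le_cosh r
  have hn' : (1:ℝ) ≤ n := by exact_mod_cast hn
  have hcc : Real.cosh r ≤ Real.cosh 1 := by
    rw [Real.cosh_le_cosh, abs_of_pos hr, abs_one]; exact hr1
  have hrn : 1 ≤ r ^ (-(n:ℝ)) :=
    Real.one_le_rpow_of_pos_of_le_one_of_nonpos hr hr1 (by linarith)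
  set c := Real.cosh r with hc
  have hA : 0 ≤ (2:ℝ) ^ ((n:ℝ)/2) := by positivity
  have hB : 0 ≤ Real.cosh 1 ^ ((n:ℝ)/2) := Real.rpow_nonneg (Real.cosh_pos 1).le _
  have hu : 0 < s - c := by linarith
  rcases le_or_gt (s - c) 1 with h | h
  · have hd : domH (s - c) = (s - c) ^ (-(1:ℝ)/2) := by
      simp [domH, hu, h, Set.indicator, not_lt.2 h]
    rw [hd]
    refine mul_le_mul_of_nonneg_right ?_ (Real.rpow_nonneg hu.le _)
    have h1 : c ^ ((n : ℝ) / 2) * (s + 1) ^ (-(n : ℝ) / 2) ≤ 1 := by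
      rw [neg_div, Real.rpow_neg (by linarith), ← div_eq_mul_inv]
      apply div_le_one_of_le₀
      · apply Real.rpow_le_rpow <;> linarith
      · apply Real.rpow_nonneg; linarith
    have h2 : (s - 1) ^ (-(n : ℝ) / 2) ≤ 2 ^ ((n:ℝ)/2) * r ^ (-(n:ℝ)) := by
      calc (s - 1) ^ (-(n : ℝ) / 2) ≤ (r^2/2) ^ (-(n : ℝ) / 2) := by
            apply Real.rpow_le_rpow_of_nonpos (by positivity) (by linarith) (by linarith)
        _ = _ := by
            rw [Real.div_rpow (by positivity) (by positivity), ← Real.rpow_natCast,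
              ← Real.rpow_mul hr.le, neg_div, Real.rpow_neg (x := 2) (by norm_num), div_inv_eq_mul,
              mul_comm]
            congr 2
            push_cast; ring
    have h3 : 0 ≤ (s - 1) ^ (-(n : ℝ) / 2) := Real.rpow_nonneg (by linarith) _
    nlinarith [mul_nonneg hB (zero_le_one.trans hrn)]
  · have hd : domH (s - c) = (s - c) ^ (-(3:ℝ)/2) := by
      simp [domH, h, Set.indicator, not_le.2 h]
    rw [hd]
    have h1 : c ^ ((n : ℝ) / 2) ≤ Real.cosh 1 ^ ((n:ℝ)/2) :=
      Real.rpow_le_rpow (by linarith) hcc (by linarith)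
    have h2 : (s + 1) ^ (-(n : ℝ) / 2) ≤ (s - c) ^ (-(1:ℝ)/2) :=
      (Real.rpow_le_rpow_of_nonpos hu (by linarith) (by linarith)).trans
        (Real.rpow_le_rpow_of_exponent_le h.le (by linarith))
    have h3 : (s - 1) ^ (-(n : ℝ) / 2) ≤ (s - c) ^ (-(1:ℝ)/2) :=
      (Real.rpow_le_rpow_of_nonpos hu (by linarith) (by linarith)).trans
        (Real.rpow_le_rpow_of_exponent_le h.le (by linarith))
    have h4 : (s - c) ^ (-(3:ℝ)/2) =
        (s - c) ^ (-(1:ℝ)/2) * (s - c) ^ (-(1:ℝ)/2) * (s - c) ^ (-(1:ℝ)/2) := by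
      rw [← Real.rpow_add hu, ← Real.rpow_add hu]; norm_num
    have p1 : 0 ≤ (s - 1) ^ (-(n : ℝ) / 2) := Real.rpow_nonneg (by linarith) _
    have p2 : 0 ≤ (s + 1) ^ (-(n : ℝ) / 2) := Real.rpow_nonneg (by linarith) _
    have p3 : 0 ≤ (s - c) ^ (-(1 : ℝ) / 2) := Real.rpow_nonneg (by linarith) _
    calc _ ≤ Real.cosh 1 ^ ((n:ℝ)/2) * (s - c) ^ (-(1:ℝ)/2) * (s - c) ^ (-(1:ℝ)/2)
            * (s - c) ^ (-(1:ℝ)/2) := by gcongr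
      _ = Real.cosh 1 ^ ((n:ℝ)/2) * (s - c) ^ (-(3:ℝ)/2) := by rw [h4]; ring
      _ ≤ _ := by
        apply mul_le_mul_of_nonneg_right _ (Real.rpow_nonneg hu.le _)
        nlinarith

theorem stmt_12 (n : ℕ) (hn : 1 ≤ n) :
    ∃ C : ℝ, 0 < C ∧ ∀ r : ℝ, 0 < r → r ≤ 1 →
      IntegrableOn (fun s : ℝ =>
          Real.cosh r ^ ((n : ℝ) / 2) * (s + 1) ^ (-(n : ℝ) / 2) *
            (s - 1) ^ (-(n : ℝ) / 2) * (s - Real.cosh r) ^ (-(1 : ℝ) / 2))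
        (Set.Ioi (Real.cosh r)) ∧
      (∫ s in Set.Ioi (Real.cosh r),
          Real.cosh r ^ ((n : ℝ) / 2) * (s + 1) ^ (-(n : ℝ) / 2) *
            (s - 1) ^ (-(n : ℝ) / 2) * (s - Real.cosh r) ^ (-(1 : ℝ) / 2))
        ≤ C * r ^ (-(n : ℝ)) := by
  have hB : 0 ≤ Real.cosh 1 ^ ((n:ℝ)/2) := Real.rpow_nonneg (Real.cosh_pos 1).le _
  have hI : 0 ≤ ∫ u, domH u := integral_nonneg domH_nonneg
  refine ⟨((2:ℝ) ^ ((n:ℝ)/2) + Real.cosh 1 ^ ((n:ℝ)/2)) * (∫ u, domH u) + 1,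
    by positivity, ?_⟩
  intro r hr hr1
  have hrn : 0 ≤ r ^ (-(n:ℝ)) := Real.rpow_nonneg hr.le _
  set K := ((2:ℝ) ^ ((n:ℝ)/2) + Real.cosh 1 ^ ((n:ℝ)/2)) with hK
  have hK0 : 0 ≤ K := by positivity
  have hG : Integrable (fun s => (K * r ^ (-(n:ℝ))) * domH (s - Real.cosh r)) :=
    (domH_integrable.comp_sub_right _).const_mul _
  have hint : IntegrableOn (fun s : ℝ =>
          Real.cosh r ^ ((n : ℝ) / 2) * (s + 1) ^ (-(n : ℝ) / 2) *
            (s - 1) ^ (-(n : ℝ) / 2) * (s - Real.cosh r) ^ (-(1 : ℝ) / 2))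
        (Set.Ioi (Real.cosh r)) := by
    refine Integrable.mono' hG.integrableOn ?_ ?_
    · apply Measurable.aestronglyMeasurable
      fun_prop
    · refine (ae_restrict_iff' measurableSet_Ioi).2 (Filter.Eventually.of_forall ?_)
      intro s hs
      have hs' : Real.cosh r < s := hs
      have hc1 : 1 ≤ Real.cosh r := Real.one_le_cosh r
      rw [Real.norm_of_nonneg]
      · exact key_bound n hn hr hr1 hs'
      · have q1 : 0 ≤ s + 1 := by linarith
        have q2 : 0 ≤ s - 1 := by linarith
        have q3 : 0 ≤ s - Real.cosh r := by linarith
        have q4 : 0 ≤ Real.cosh r := by linarith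
        exact mul_nonneg (mul_nonneg (mul_nonneg (Real.rpow_nonneg q4 _)
          (Real.rpow_nonneg q1 _)) (Real.rpow_nonneg q2 _)) (Real.rpow_nonneg q3 _)
  refine ⟨hint, ?_⟩
  calc _ ≤ ∫ s in Set.Ioi (Real.cosh r), (K * r ^ (-(n:ℝ))) * domH (s - Real.cosh r) :=
        setIntegral_mono_on hint hG.integrableOn measurableSet_Ioi
          (fun s hs => key_bound n hn hr hr1 hs)
    _ ≤ ∫ s, (K * r ^ (-(n:ℝ))) * domH (s - Real.cosh r) :=
        setIntegral_le_integral hG (Filter.Eventually.of_forall fun s =>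
          mul_nonneg (mul_nonneg hK0 hrn) (domH_nonneg _))
    _ = (K * r ^ (-(n:ℝ))) * ∫ u, domH u := by
        rw [integral_const_mul, integral_sub_right_eq_self domH]
    _ ≤ _ := by nlinarith
end
end

section
/- Let d, N ≥ 1, U ⊆ ℝᵈ × ℝᴺ open, φ : U → ℝ a C² function and λ : U → ℝᵈ a C¹ map. Let x : Ṽ → ℝᵈ (Ṽ ⊆ ℝᵈ open) and θ : W̃ → ℝᴺ (W̃ ⊆ ℝᵈ × ℝᴺ open) be C¹ maps such that T(x̃, θ̃) := (x(x̃), θ(x̃, θ̃)) lies in U, and set φ̃ = φ ∘ T and λ̃ = λ ∘ T. Then at every point (x̃, θ̃) at which ∇_θ φ(T(x̃, θ̃)) = 0, the Jacobian determinants satisfy det D_{(x̃,θ̃)}(λ̃, ∇_{θ̃}φ̃)(x̃,θ̃) = (det ∂θ/∂θ̃(x̃,θ̃))² · det ∂x/∂x̃(x̃) · det D_{(x,θ)}(λ, ∇_θφ)(T(x̃,θ̃)), where D_{(x̃,θ̃)}(F) denotes the (d+N)×(d+N) Jacobian matrix of the ℝ^{d+N}-valued map F. -/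
open Set

noncomputable section

/-- The standard basis vectors of `ℝᵈ × ℝᴺ`, indexed by `Fin d ⊕ Fin N`. -/
def pbasis (d N : ℕ) : Fin d ⊕ Fin N → (Fin d → ℝ) × (Fin N → ℝ)
  | Sum.inl i => (Pi.single i 1, 0)
  | Sum.inr j => (0, Pi.single j 1)

/-- The components of a vector of `ℝᵈ × ℝᴺ`, indexed by `Fin d ⊕ Fin N`. -/
def pcomp {d N : ℕ} (v : (Fin d → ℝ) × (Fin N → ℝ)) : Fin d ⊕ Fin N → ℝ
  | Sum.inl i => v.1 i
  | Sum.inr j => v.2 j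

/-- The Jacobian matrix of a self-map of `ℝᵈ × ℝᴺ` at a point (rows indexed by output
components, columns by input directions). -/
def jmat {d N : ℕ} (H : (Fin d → ℝ) × (Fin N → ℝ) → (Fin d → ℝ) × (Fin N → ℝ))
    (q : (Fin d → ℝ) × (Fin N → ℝ)) : Matrix (Fin d ⊕ Fin N) (Fin d ⊕ Fin N) ℝ :=
  Matrix.of fun a b => pcomp (fderiv ℝ H q (pbasis d N b)) a


/-- Product rule at a zero of the second factor, the first factor being only continuous. -/
theorem hasFDerivAt_mul_zero {E : Type*} [NormedAddCommGroup E] [NormedSpace ℝ E]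
    {c f : E → ℝ} {f' : E →L[ℝ] ℝ} {w : E} (hc : ContinuousAt c w)
    (hf : HasFDerivAt f f' w) (h0 : f w = 0) :
    HasFDerivAt (fun q => c q * f q) (c w • f') w := by
  have h1 : HasFDerivAt (fun q => c w * f q) (c w • f') w := hf.const_mul (c w)
  have h2 : HasFDerivAt (fun q => (c q - c w) * f q) (0 : E →L[ℝ] ℝ) w := by
    rw [hasFDerivAt_iff_isLittleO]
    have hO : (fun q => f q) =O[nhds w] fun q => q - w := by
      simpa [h0] using hf.isBigO_sub
    have ho : (fun q => c q - c w) =o[nhds w] fun _ => (1 : ℝ) := by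
      rw [Asymptotics.isLittleO_one_iff]
      have := hc.tendsto.sub_const (c w)
      simpa using this
    have := ho.mul_isBigO hO.norm_right
    simpa [h0] using this
  have h3 := h1.add h2
  rw [add_zero] at h3
  refine h3.congr_of_eventuallyEq (Filter.Eventually.of_forall fun q => ?_)
  simp only [Pi.add_apply]
  ring

theorem pcomp_sum_basis {d N : ℕ} (v : (Fin d → ℝ) × (Fin N → ℝ)) :
    v = ∑ b, pcomp v b • pbasis d N b := by
  rw [Fintype.sum_sum_type]
  ext i
  · simp [pcomp, pbasis, Prod.fst_sum, Finset.sum_apply, Pi.single_apply]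
  · simp [pcomp, pbasis, Prod.snd_sum, Finset.sum_apply, Pi.single_apply]

theorem clm_expand {d N : ℕ} (L : (Fin d → ℝ) × (Fin N → ℝ) →L[ℝ] ℝ)
    (v : (Fin d → ℝ) × (Fin N → ℝ)) :
    L v = ∑ b, L (pbasis d N b) * pcomp v b := by
  conv_lhs => rw [pcomp_sum_basis v]
  rw [map_sum]
  exact Finset.sum_congr rfl fun b _ => by rw [map_smul, smul_eq_mul, mul_comm]

/-- Invariance of the symbol density under change of phase function: if
`φ̃(x̃,θ̃) = φ(x(x̃), θ(x̃,θ̃))` and `λ̃ = λ ∘ T`, then at every point of the critical set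
`{∇_θφ ∘ T = 0}` the Jacobian determinants satisfy
`det D(λ̃, ∇_{θ̃}φ̃) = (det ∂θ/∂θ̃)² · det ∂x/∂x̃ · det D(λ, ∇_θφ) ∘ T`. -/
theorem stmt_16 (d N : ℕ) (hd : 1 ≤ d) (hN : 1 ≤ N)
    (U : Set ((Fin d → ℝ) × (Fin N → ℝ))) (hU : IsOpen U)
    (V : Set (Fin d → ℝ)) (hV : IsOpen V)
    (W : Set ((Fin d → ℝ) × (Fin N → ℝ))) (hW : IsOpen W)
    (φ : (Fin d → ℝ) × (Fin N → ℝ) → ℝ) (hφ : ContDiffOn ℝ 2 φ U)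
    (lam : (Fin d → ℝ) × (Fin N → ℝ) → Fin d → ℝ) (hlam : ContDiffOn ℝ 1 lam U)
    (x : (Fin d → ℝ) → Fin d → ℝ) (hx : ContDiffOn ℝ 1 x V)
    (θ : (Fin d → ℝ) × (Fin N → ℝ) → Fin N → ℝ) (hθ : ContDiffOn ℝ 1 θ W)
    (T : (Fin d → ℝ) × (Fin N → ℝ) → (Fin d → ℝ) × (Fin N → ℝ))
    (hT : ∀ w, T w = (x w.1, θ w))
    (hmem : ∀ w ∈ W, w.1 ∈ V ∧ T w ∈ U) :
    ∀ w ∈ W,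
      (∀ j : Fin N, fderiv ℝ φ (T w) ((0 : Fin d → ℝ), Pi.single j (1 : ℝ)) = 0) →
      (jmat (fun q => (lam (T q), fun j => fderiv ℝ (φ ∘ T) q (0, Pi.single j 1))) w).det
        = ((Matrix.of fun j j' : Fin N =>
              fderiv ℝ θ w ((0 : Fin d → ℝ), Pi.single j' (1 : ℝ)) j).det) ^ 2 *
          (Matrix.of fun i i' : Fin d =>
              fderiv ℝ x w.1 (Pi.single i' (1 : ℝ)) i).det *
          (jmat (fun q => (lam q, fun j => fderiv ℝ φ q (0, Pi.single j 1))) (T w)).det := by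
  intro w hw hcrit
  have hWw : W ∈ nhds w := hW.mem_nhds hw
  have hTd : ∀ q ∈ W, HasFDerivAt T
      (((fderiv ℝ x q.1).comp (ContinuousLinearMap.fst ℝ _ _)).prod (fderiv ℝ θ q)) q := by
    intro q hq
    have h1 : HasFDerivAt x (fderiv ℝ x q.1) q.1 :=
      ((hx.contDiffAt (hV.mem_nhds (hmem q hq).1)).differentiableAt (by simp)).hasFDerivAt
    have h2 : HasFDerivAt θ (fderiv ℝ θ q) q :=
      ((hθ.contDiffAt (hW.mem_nhds hq)).differentiableAt (by simp)).hasFDerivAt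
    have h3 := (h1.comp q hasFDerivAt_fst).prodMk h2
    exact h3.congr_of_eventuallyEq (Filter.Eventually.of_forall fun q => hT q)
  have hφd : ∀ q ∈ W, HasFDerivAt φ (fderiv ℝ φ (T q)) (T q) := fun q hq =>
    ((hφ.contDiffAt (hU.mem_nhds (hmem q hq).2)).differentiableAt (by simp)).hasFDerivAt
  obtain ⟨T', hT'⟩ : ∃ T', T' = ((fderiv ℝ x w.1).comp
    (ContinuousLinearMap.fst ℝ (Fin d → ℝ) (Fin N → ℝ))).prod (fderiv ℝ θ w) := ⟨_, rfl⟩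
  have hTw : HasFDerivAt T T' w := hT' ▸ hTd w hw
  have hlamw : HasFDerivAt lam (fderiv ℝ lam (T w)) (T w) :=
    ((hlam.contDiffAt (hU.mem_nhds (hmem w hw).2)).differentiableAt (by simp)).hasFDerivAt
  -- the partial gradient of the phase
  let F : Fin N → (Fin d → ℝ) × (Fin N → ℝ) → ℝ := fun j q => fderiv ℝ φ q (0, Pi.single j 1)
  have hF : ∀ j, HasFDerivAt (F j) (fderiv ℝ (F j) (T w)) (T w) := by
    intro j
    have h1 : ContDiffAt ℝ 1 (fderiv ℝ φ) (T w) :=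
      (hφ.contDiffAt (hU.mem_nhds (hmem w hw).2)).fderiv_right (by norm_num)
    have h2 : DifferentiableAt ℝ (F j) (T w) :=
      (h1.differentiableAt (by simp)).clm_apply (differentiableAt_const _)
    exact h2.hasFDerivAt
  have hA : ∀ j k, ContinuousAt (fun q => fderiv ℝ θ q ((0 : Fin d → ℝ), Pi.single j (1 : ℝ)) k) w := by
    intro j k
    have h1 : ContinuousAt (fderiv ℝ θ) w :=
      ((hθ.contDiffAt hWw).fderiv_right (m := 0) (by norm_num)).continuousAt
    have h2 : ContinuousAt (fun q => fderiv ℝ θ q ((0 : Fin d → ℝ), Pi.single j (1 : ℝ))) w :=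
      h1.clm_apply continuousAt_const
    exact (continuousAt_pi.1 h2) k
  have hG : ∀ j, HasFDerivAt (fun q => fderiv ℝ (φ ∘ T) q (0, Pi.single j 1))
      (∑ k, fderiv ℝ θ w ((0 : Fin d → ℝ), Pi.single j (1 : ℝ)) k •
        (fderiv ℝ (F k) (T w)).comp T') w := by
    intro j
    have h1 : HasFDerivAt (fun q => ∑ k,
        fderiv ℝ θ q ((0 : Fin d → ℝ), Pi.single j (1 : ℝ)) k * F k (T q))
        (∑ k, fderiv ℝ θ w ((0 : Fin d → ℝ), Pi.single j (1 : ℝ)) k •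
        (fderiv ℝ (F k) (T w)).comp T') w := by
      apply HasFDerivAt.fun_sum
      intro k _
      exact hasFDerivAt_mul_zero (hA j k) ((hF k).comp w hTw) (hcrit k)
    refine h1.congr_of_eventuallyEq ?_
    filter_upwards [hWw] with q hq
    rw [((hφd q hq).comp q (hTd q hq)).fderiv, ContinuousLinearMap.comp_apply, clm_expand]
    simp [Fintype.sum_sum_type, pbasis, pcomp, F, mul_comm]
  have hJ1 := (hlamw.comp w hTw).prodMk (hasFDerivAt_pi.2 hG)
  have hJ2 := hlamw.prodMk (hasFDerivAt_pi.2 hF)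
  let A : Matrix (Fin N) (Fin N) ℝ :=
    Matrix.of fun j j' => fderiv ℝ θ w ((0 : Fin d → ℝ), Pi.single j' (1 : ℝ)) j
  let X : Matrix (Fin d) (Fin d) ℝ := Matrix.of fun i i' => fderiv ℝ x w.1 (Pi.single i' (1 : ℝ)) i
  let B : Matrix (Fin N) (Fin d) ℝ :=
    Matrix.of fun j i => fderiv ℝ θ w (Pi.single i (1 : ℝ), (0 : Fin N → ℝ)) j
  have key : jmat (fun q => (lam (T q), fun j => fderiv ℝ (φ ∘ T) q (0, Pi.single j 1))) w
      = Matrix.fromBlocks 1 0 0 A.transpose *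
        (jmat (fun q => (lam q, fun j => fderiv ℝ φ q (0, Pi.single j 1))) (T w) *
          Matrix.fromBlocks X 0 B A) := by
    have hM : ∀ c b, (Matrix.fromBlocks X 0 B A) c b = pcomp (T' (pbasis d N b)) c := by
      rintro (c | c) (b | b) <;> simp [hT', pcomp, pbasis, X, A, B]
    have e1 := hJ1.fderiv
    have e2 := hJ2.fderiv
    simp only [Function.comp_def] at e1
    unfold jmat
    simp only [F] at e2
    rw [e2]
    simp only [Function.comp_def]
    rw [e1]
    ext a b
    rw [Matrix.mul_apply, Fintype.sum_sum_type]
    simp only [Matrix.mul_apply, hM]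
    rcases a with i | j
    · have := clm_expand ((ContinuousLinearMap.proj i).comp (fderiv ℝ lam (T w))) (T' (pbasis d N b))
      simp only [ContinuousLinearMap.comp_apply, ContinuousLinearMap.proj_apply] at this
      simp [pcomp, Matrix.one_apply, this]
    · have := fun k => clm_expand (fderiv ℝ (F k) (T w)) (T' (pbasis d N b))
      simp only [F] at this
      simp [pcomp, A, F, this]
  rw [key, Matrix.det_mul, Matrix.det_mul, Matrix.det_fromBlocks_zero₁₂,
    Matrix.det_fromBlocks_zero₁₂, Matrix.det_transpose, Matrix.det_one]
  change _ = A.det ^ 2 * X.det * _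
  ring
end
end
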